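/- Let k be a commutative ring, G a group, and H a subgroup of G. If every finitely generated subgroup of H is finite with order invertible in k, then the permutation module k[G/H] is a flat k[G]-module. -/

import Mathlib

open scoped BigOperators

/-- A module `M` over a (possibly noncommutative) ring `R` is flat, expressed via the
equational criterion for flatness (which is equivalent to exactness of the tensor
product with `M`, and makes sense over noncommutative rings). -/
def IsFlatModule (R M : Type*) [Ring R] [AddCommGroup M] [Module R M] : Prop :=
  ∀ (n : ℕ) (r : Fin n → R) (x : Fin n → M), (∑ i, r i • x i) = 0 →
    ∃ (m : ℕ) (a : Fin n → Fin m → R) (y : Fin m → M),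
      (∀ i, x i = ∑ j, a i j • y j) ∧ ∀ j, (∑ i, r i * a i j) = 0

section Aux
open MonoidAlgebra

variable {k G : Type*} [CommRing k] [Group G] (H : Subgroup G)

/-- The canonical generator of the permutation module. -/
noncomputable def permGen (k : Type*) [CommRing k] :
    (Representation.ofMulAction k G (G ⧸ H)).asModule :=
  (Representation.ofMulAction k G (G ⧸ H)).asModuleEquiv.symm
    (MonoidAlgebra.single ((1 : G) : G ⧸ H) (1 : k))

lemma single_smul_permGen (g : G) (t : k) :
    (Representation.ofMulAction k G (G ⧸ H)).asModuleEquiv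
      (MonoidAlgebra.single g t • permGen H k) = MonoidAlgebra.single (g : G ⧸ H) t := by
  rw [Representation.asModuleEquiv_map_smul, Representation.asAlgebraHom_single, permGen,
    LinearEquiv.apply_symm_apply, LinearMap.smul_apply, Representation.ofMulAction_single,
    MonoidAlgebra.smul_single]
  simp

lemma smul_permGen (s : MonoidAlgebra k G) :
    (Representation.ofMulAction k G (G ⧸ H)).asModuleEquiv (s • permGen H k) =
      MonoidAlgebra.mapDomain (fun g : G => (g : G ⧸ H)) s := by
  induction s using MonoidAlgebra.induction_linear with
  | zero => simp
  | add x y hx hy => rw [add_smul, map_add, hx, hy, MonoidAlgebra.mapDomain_add]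
  | single g t => rw [single_smul_permGen, MonoidAlgebra.mapDomain_single]

lemma exists_smul_permGen (x : (Representation.ofMulAction k G (G ⧸ H)).asModule) :
    ∃ b : MonoidAlgebra k G, x = b • permGen H k := by
  refine ⟨MonoidAlgebra.mapDomain Quotient.out
    ((Representation.ofMulAction k G (G ⧸ H)).asModuleEquiv x), ?_⟩
  apply (Representation.ofMulAction k G (G ⧸ H)).asModuleEquiv.injective
  rw [smul_permGen]
  generalize (Representation.ofMulAction k G (G ⧸ H)).asModuleEquiv x = z
  induction z using MonoidAlgebra.induction_linear with
  | zero => simp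
  | add x y hx hy => rw [MonoidAlgebra.mapDomain_add, MonoidAlgebra.mapDomain_add, ← hx, ← hy]
  | single g t => simp

/-- The sum of the elements of a finite subgroup. -/
noncomputable def normSum (k : Type*) [CommRing k] (K : Subgroup G) [Fintype K] :
    MonoidAlgebra k G := ∑ h : K, MonoidAlgebra.single (h : G) (1 : k)

lemma single_mul_normSum (K : Subgroup G) [Fintype K] (g g' : G) (t : k) (h : g'⁻¹ * g ∈ K) :
    MonoidAlgebra.single g t * normSum k K = MonoidAlgebra.single g' t * normSum k K := by
  simp only [normSum, Finset.mul_sum, MonoidAlgebra.single_mul_single]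
  refine Fintype.sum_equiv (Equiv.mulLeft ⟨_, h⟩) _ _ fun x => ?_
  simp [mul_assoc]

lemma normSum_smul_permGen (K : Subgroup G) [Fintype K] (hK : K ≤ H) (u : k)
    (hu : (Nat.card K : k) * u = 1) :
    (normSum k K * MonoidAlgebra.single 1 u) • permGen H k = permGen H k := by
  apply (Representation.ofMulAction k G (G ⧸ H)).asModuleEquiv.injective
  simp only [normSum, Finset.sum_mul, MonoidAlgebra.single_mul_single, Finset.sum_smul, map_sum,
    single_smul_permGen, mul_one, one_mul]
  have : ∀ h : K, ((h : G) : G ⧸ H) = ((1 : G) : G ⧸ H) := fun h => by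
    rw [QuotientGroup.eq]; simpa using hK h.2
  simp only [this, Finset.sum_const, Finset.card_univ, permGen, LinearEquiv.apply_symm_apply]
  rw [MonoidAlgebra.smul_single, nsmul_eq_mul, ← Nat.card_eq_fintype_card, hu]

lemma exists_mul_normSum_eq_zero (s : MonoidAlgebra k G) (hs : s • permGen H k = 0) :
    ∃ K : Subgroup G, K ≤ H ∧ K.FG ∧ ∀ [Fintype K], s * normSum k K = 0 := by
  classical
  let τ : G → G := fun g => ((g : G ⧸ H)).out
  refine ⟨Subgroup.closure (s.coeff.support.image fun g => (τ g)⁻¹ * g), ?_, ⟨_, rfl⟩, ?_⟩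
  · rw [Subgroup.closure_le]
    intro x hx
    simp only [Finset.coe_image, Set.mem_image] at hx
    obtain ⟨g, -, rfl⟩ := hx
    rw [SetLike.mem_coe, ← QuotientGroup.eq]
    exact Quotient.out_eq _
  · intro _
    have h0 : MonoidAlgebra.mapDomain τ s = 0 := by
      have h1 := smul_permGen H s
      rw [hs, map_zero] at h1
      have h2 : MonoidAlgebra.mapDomain τ s = MonoidAlgebra.mapDomain Quotient.out
          (MonoidAlgebra.mapDomain (fun g : G => (g : G ⧸ H)) s) := by
        generalize s = z
        induction z using MonoidAlgebra.induction_linear with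
        | zero => simp
        | add x y hx hy => simp only [MonoidAlgebra.mapDomain_add, hx, hy]
        | single g t => simp [τ]
      rw [h2, ← h1, MonoidAlgebra.mapDomain_zero]
    have h3 : MonoidAlgebra.mapDomain τ s =
        s.coeff.sum fun g t => MonoidAlgebra.single (τ g) t := by
      generalize s = z
      induction z using MonoidAlgebra.induction_linear with
      | zero => simp
      | add x y hx hy =>
        rw [MonoidAlgebra.mapDomain_add, hx, hy, MonoidAlgebra.coeff_add,
          Finsupp.sum_add_index'] <;> simp
      | single g t => simp
    refine Eq.trans ?_ (zero_mul (normSum k (Subgroup.closure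
      (s.coeff.support.image fun g => (τ g)⁻¹ * g : Finset G))))
    rw [← h0, h3]
    conv_lhs => enter [1]; rw [← MonoidAlgebra.sum_coeff_single s]
    rw [Finsupp.sum, Finsupp.sum, Finset.sum_mul, Finset.sum_mul]
    refine Finset.sum_congr rfl fun g hg => single_mul_normSum _ _ _ _ ?_
    exact Subgroup.subset_closure (Finset.mem_coe.2 (Finset.mem_image_of_mem _ hg))

end Aux

/-- Let `k` be a commutative ring, `G` a group, `H ≤ G` a subgroup.
If every finitely generated subgroup of `H` is finite with order invertible in `k`,
then the permutation module `k[G/H]` is a flat `k[G]`-module. -/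
theorem permutation_module_flat_of_locally_unit_finite
    (k G : Type*) [CommRing k] [Group G] (H : Subgroup G)
    (hloc : ∀ K : Subgroup G, K ≤ H → K.FG → Finite K ∧ IsUnit (Nat.card K : k)) :
    IsFlatModule (MonoidAlgebra k G)
      (Representation.ofMulAction k G (G ⧸ H)).asModule := by
  classical
  intro n r x hx
  choose b hb using fun i => exists_smul_permGen H (x i)
  have hs : (∑ i, r i * b i) • permGen H k = 0 := by
    rw [← hx, Finset.sum_smul]
    exact Finset.sum_congr rfl fun i _ => by rw [mul_smul, ← hb]
  obtain ⟨K, hKH, hfg, hK⟩ := exists_mul_normSum_eq_zero H _ hs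
  obtain ⟨hfin, hunit⟩ := hloc K hKH hfg
  have : Fintype K := Fintype.ofFinite K
  obtain ⟨u, hu⟩ := hunit.exists_right_inv
  refine ⟨1, fun i _ => b i * (normSum k K * MonoidAlgebra.single 1 u), fun _ => permGen H k,
    fun i => ?_, fun _ => ?_⟩
  · rw [Fin.sum_univ_one, mul_smul, normSum_smul_permGen H K hKH u hu, hb]
  · simp only [← mul_assoc]
    rw [← Finset.sum_mul, ← Finset.sum_mul, hK, zero_mul]
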